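/- Let t > 0 and ξ ∈ ℝ^d with ξ ≠ 0. Then the discrete Fourier transforms of the Jacobi polynomial iteration converge pointwise: ∑_{v∈ℤ^d} x_{⌊t/ε⌋}(v) e^{iε⟨ξ,v⟩} → 2^{d/2} Γ(d/2+1) ⟨ξ, Qξ⟩^{−d/4} t^{−d/2} J_{d/2}( t ⟨ξ, Qξ⟩^{1/2} ) as ε → 0⁺, where J_{d/2} is the Bessel function of the first kind of order d/2. -/

import Mathlib

open MeasureTheory Matrix Filter Topology Real

noncomputable section

def latticeConv {d : ℕ} (ω x : (Fin d → ℤ) → ℝ) : (Fin d → ℤ) → ℝ :=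
  fun v => ∑' η : Fin d → ℤ, ω (v - η) * x η

def covQ (d : ℕ) (ω : (Fin d → ℤ) → ℝ) : Matrix (Fin d) (Fin d) ℝ :=
  Matrix.of fun i j => ∑' v : Fin d → ℤ, ω v * (v i : ℝ) * (v j : ℝ)

def ftOmega {d : ℕ} (ω : (Fin d → ℤ) → ℝ) (ξ : Fin d → ℝ) : ℂ :=
  ∑' v : Fin d → ℤ, (ω v : ℂ) * Complex.exp (Complex.I * ((∑ i, ξ i * (v i : ℝ) : ℝ) : ℂ))

def aCoef0 (d : ℕ) : ℝ := ((d : ℝ) + 4) / (2 * (2 + (d : ℝ)))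
def bCoef0 (d : ℕ) : ℝ := (d : ℝ) / (2 * (2 + (d : ℝ)))
def aCoef (d n : ℕ) : ℝ :=
  (2 * (n : ℝ) + (d : ℝ)/2 + 1) * (2 * (n : ℝ) + (d : ℝ)/2 + 2) / (2 * ((n : ℝ) + 1 + (d : ℝ)/2)^2)
def bCoef (d n : ℕ) : ℝ :=
  (d : ℝ)^2 * (2 * (n : ℝ) + (d : ℝ)/2 + 1) / (8 * ((n : ℝ) + 1 + (d : ℝ)/2)^2 * (2 * (n : ℝ) + (d : ℝ)/2))
def cCoef (d n : ℕ) : ℝ :=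
  (n : ℝ)^2 * (2 * (n : ℝ) + (d : ℝ)/2 + 2) / (((n : ℝ) + 1 + (d : ℝ)/2)^2 * (2 * (n : ℝ) + (d : ℝ)/2))

def besselJ (ν z : ℝ) : ℝ :=
  ∑' m : ℕ, ((-1 : ℝ)^m / ((m.factorial : ℝ) * Real.Gamma ((m : ℝ) + ν + 1))) * (z / 2) ^ (2 * (m : ℝ) + ν)

def jacobiP (α β : ℝ) (n : ℕ) (x : ℝ) : ℝ :=
  ∑ s ∈ Finset.range (n + 1),
    (Real.Gamma ((n : ℝ) + α + 1) / (Real.Gamma (α + (s : ℝ) + 1) * ((n - s).factorial : ℝ))) *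
    (Real.Gamma ((n : ℝ) + β + 1) / (Real.Gamma ((n : ℝ) + β - (s : ℝ) + 1) * (s.factorial : ℝ))) *
    ((x - 1) / 2) ^ s * ((x + 1) / 2) ^ (n - s)

def jacobiPi (α β : ℝ) (n : ℕ) (x : ℝ) : ℝ := jacobiP α β n x / jacobiP α β n 1

def pd {d : ℕ} (j : Fin d) (g : (Fin d → ℝ) → ℝ) : (Fin d → ℝ) → ℝ :=
  fun y => deriv (fun s => g (Function.update y j s)) (y j)

/-!
Convolution by `ω` acts on Fourier transforms as multiplication by `ω̂`, so the iteration is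
`x̂ₙ = πₙ(ω̂)`, where `πₙ` is the Jacobi polynomial `P_n^{(d/2,0)}` normalized by `πₙ(1) = 1`: its
three-term recurrence is exactly the one with coefficients `aₙ`, `bₙ`, `cₙ`. Written as the
terminating series `₂F₁(-n, n + d/2 + 1; d/2 + 1; (1 - x)/2)`, `πₙ(x)` converges term by term to a
`₀F₁` series, that is to a Bessel function of order `d/2`, as soon as `n²(1 - x)/2` converges
(Mehler–Heine). With `n = ⌊t/ε⌋` and `x = ω̂(εξ) = 1 - ε²⟨ξ, Qξ⟩/2 + o(ε²)` the limit of
`n²(1 - x)/2` is `t²⟨ξ, Qξ⟩/4`. Domination of the hypergeometric terms, by those of an exponential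
series, follows from `|(n + c)_k| ≤ (C n)^k |(b)_k|`.
-/

section Contiguity

variable {K : Type*} [Field K]

lemma ascPochhammer_eval_succ_left {R : Type*} [CommSemiring R] (k : ℕ) (x : R) :
    (ascPochhammer R (k + 1)).eval x = x * (ascPochhammer R k).eval (x + 1) := by
  simp [ascPochhammer_succ_left]

lemma mul_ascPochhammer_eval_add_one {R : Type*} [CommSemiring R] (k : ℕ) (x : R) :
    x * (ascPochhammer R (k + 1)).eval (x + 1) =
      (ascPochhammer R k).eval x * ((x + k) * (x + k + 1)) := by
  rw [← ascPochhammer_eval_succ_left, ascPochhammer_succ_eval, ascPochhammer_succ_eval]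
  push_cast
  ring

lemma ordinaryHypergeometricCoefficient_zero (a b c : K) :
    ordinaryHypergeometricCoefficient a b c 0 = 1 := by
  simp [ordinaryHypergeometricCoefficient]

lemma ordinaryHypergeometricCoefficient_succ (a b c : K) (k : ℕ) :
    ordinaryHypergeometricCoefficient a b c (k + 1) =
      ordinaryHypergeometricCoefficient a b c k * ((a + k) * (b + k) / ((k + 1) * (c + k))) := by
  simp only [ordinaryHypergeometricCoefficient, ascPochhammer_succ_eval, Nat.factorial_succ,
    Nat.cast_mul, Nat.cast_succ, mul_inv, div_eq_mul_inv]
  ring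

lemma mul_ordinaryHypergeometricCoefficient_contiguous (a b c : K) (k : ℕ) :
    b * ordinaryHypergeometricCoefficient (a - 1) (b + 1) c (k + 1) =
      ordinaryHypergeometricCoefficient a b c k *
        ((a - 1) * (b + k) * (b + k + 1) / ((k + 1) * (c + k))) := by
  have lower : (ascPochhammer K (k + 1)).eval (a - 1) = (a - 1) * (ascPochhammer K k).eval a := by
    rw [ascPochhammer_eval_succ_left, sub_add_cancel]
  simp only [ordinaryHypergeometricCoefficient, lower, ascPochhammer_succ_eval k c,
    Nat.factorial_succ, Nat.cast_mul, Nat.cast_succ, mul_inv, div_eq_mul_inv]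
  linear_combination ((k : K) + 1)⁻¹ * (k.factorial : K)⁻¹ * (a - 1) *
    (ascPochhammer K k).eval a * (((ascPochhammer K k).eval c)⁻¹ * (c + k)⁻¹) *
    mul_ascPochhammer_eval_add_one k b

lemma ordinaryHypergeometricCoefficient_comm (a b c : K) (k : ℕ) :
    ordinaryHypergeometricCoefficient a b c k = ordinaryHypergeometricCoefficient b a c k := by
  simp only [ordinaryHypergeometricCoefficient, mul_right_comm]

/-- The coefficient of `((1 - x) / 2) ^ k` in the Jacobi function `P_ν^{(α,β)}`, normalized to take
the value `1` at `x = 1`. The degree `ν` need not be a natural number, so that the degrees `ν - 1`,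
`ν`, `ν + 1` of the three-term recurrence can be treated uniformly. -/
def jacobiCoeff (α β ν : K) (k : ℕ) : K :=
  ordinaryHypergeometricCoefficient (-ν) (ν + α + β + 1) (α + 1) k

lemma jacobiCoeff_zero_right (α β ν : K) : jacobiCoeff α β ν 0 = 1 :=
  ordinaryHypergeometricCoefficient_zero _ _ _

lemma jacobiCoeff_natCast_of_lt (α β : K) {n k : ℕ} (hk : n < k) : jacobiCoeff α β n k = 0 := by
  simp [jacobiCoeff, ordinaryHypergeometricCoefficient, ascPochhammer_eval_neg_coe_nat_of_lt hk]

lemma mul_jacobiCoeff_add_one (α β ν : K) (k : ℕ) :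
    (ν + α + β + 1) * jacobiCoeff α β (ν + 1) (k + 1) = jacobiCoeff α β ν k *
      ((-ν - 1) * (ν + α + β + 1 + k) * (ν + α + β + 1 + k + 1) / ((k + 1) * (α + 1 + k))) := by
  rw [jacobiCoeff, jacobiCoeff, neg_add', show ν + 1 + α + β + 1 = ν + α + β + 1 + 1 by ring]
  exact mul_ordinaryHypergeometricCoefficient_contiguous (-ν) (ν + α + β + 1) (α + 1) k

lemma mul_jacobiCoeff_sub_one (α β ν : K) (k : ℕ) :
    -ν * jacobiCoeff α β (ν - 1) (k + 1) = jacobiCoeff α β ν k *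
      ((ν + α + β) * (-ν + k) * (-ν + k + 1) / ((k + 1) * (α + 1 + k))) := by
  rw [jacobiCoeff, jacobiCoeff, ordinaryHypergeometricCoefficient_comm,
    ordinaryHypergeometricCoefficient_comm (-ν), show -(ν - 1) = -ν + 1 by ring,
    show ν - 1 + α + β + 1 = ν + α + β + 1 - 1 by ring,
    show ν + α + β = ν + α + β + 1 - 1 by ring, sub_add_cancel]
  exact mul_ordinaryHypergeometricCoefficient_contiguous (ν + α + β + 1) (-ν) (α + 1) k

lemma jacobiCoeff_recurrence [CharZero K] {α : K} (β ν : K) {k : ℕ} (hα : α + 1 + k ≠ 0) :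
    2 * (ν + α + β + 1) * (ν + α + 1) * (2 * ν + α + β) * jacobiCoeff α β (ν + 1) (k + 1) =
      (2 * ν + α + β + 1) *
        (((2 * ν + α + β + 2) * (2 * ν + α + β) + (α ^ 2 - β ^ 2)) * jacobiCoeff α β ν (k + 1) -
          2 * ((2 * ν + α + β + 2) * (2 * ν + α + β)) * jacobiCoeff α β ν k) -
      2 * ν * (ν + β) * (2 * ν + α + β + 2) * jacobiCoeff α β (ν - 1) (k + 1) := by
  have next := mul_jacobiCoeff_add_one α β ν k
  have previous := mul_jacobiCoeff_sub_one α β ν k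
  have current : jacobiCoeff α β ν (k + 1) = jacobiCoeff α β ν k *
      ((-ν + k) * (ν + α + β + 1 + k) / ((k + 1) * (α + 1 + k))) :=
    ordinaryHypergeometricCoefficient_succ _ _ _ k
  have hk : (k : K) + 1 ≠ 0 := by exact_mod_cast k.succ_ne_zero
  rw [current]
  generalize jacobiCoeff α β ν k = T at *
  have rational_identity : 2 * (ν + α + 1) * (2 * ν + α + β) *
        (T * ((-ν - 1) * (ν + α + β + 1 + k) * (ν + α + β + 1 + k + 1) /
          ((k + 1) * (α + 1 + k)))) =
      (2 * ν + α + β + 1) * (((2 * ν + α + β + 2) * (2 * ν + α + β) + (α ^ 2 - β ^ 2)) *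
          (T * ((-ν + k) * (ν + α + β + 1 + k) / ((k + 1) * (α + 1 + k)))) -
        2 * ((2 * ν + α + β + 2) * (2 * ν + α + β)) * T) +
      2 * (ν + β) * (2 * ν + α + β + 2) *
        (T * ((ν + α + β) * (-ν + k) * (-ν + k + 1) / ((k + 1) * (α + 1 + k)))) := by
    field_simp
    ring
  linear_combination 2 * (ν + α + 1) * (2 * ν + α + β) * next + rational_identity -
    2 * (ν + β) * (2 * ν + α + β + 2) * previous

end Contiguity

section JacobiPolynomials

variable {K : Type*} [Field K] [TopologicalSpace K] [IsTopologicalRing K]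

/-- The Jacobi polynomial `P_n^{(α,β)}`, normalized to take the value `1` at `x = 1`. It is encoded
as a terminating hypergeometric series, which makes sense for complex `x` and avoids the quotient
by `P_n^{(α,β)}(1)`. -/
def normalizedJacobi (α β : K) (n : ℕ) (x : K) : K :=
  ₂F₁ (-(n : K)) (n + α + β + 1) (α + 1) ((1 - x) / 2)

lemma hasSum_normalizedJacobi (α β : K) (n : ℕ) (x : K) :
    HasSum (fun k => jacobiCoeff α β n k * ((1 - x) / 2) ^ k) (normalizedJacobi α β n x) := by
  rw [normalizedJacobi, ordinaryHypergeometric_eq_tsum]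
  refine (summable_of_ne_finset_zero (s := Finset.range (n + 1)) fun k hk => ?_).hasSum
  rw [jacobiCoeff_natCast_of_lt α β (by simpa using hk), zero_mul]

lemma hasSum_normalizedJacobi_sub_one (α β : K) (n : ℕ) (x : K) :
    HasSum (fun k => jacobiCoeff α β n (k + 1) * ((1 - x) / 2) ^ (k + 1))
      (normalizedJacobi α β n x - 1) := by
  simpa [jacobiCoeff_zero_right] using (hasSum_nat_add_iff' 1).mpr (hasSum_normalizedJacobi α β n x)

variable [T2Space K]

lemma normalizedJacobi_zero (α β x : K) : normalizedJacobi α β 0 x = 1 := by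
  refine sub_eq_zero.mp ((hasSum_normalizedJacobi_sub_one α β 0 x).unique ?_)
  simpa only [jacobiCoeff_natCast_of_lt α β (Nat.succ_pos _), zero_mul] using hasSum_zero

theorem normalizedJacobi_recurrence [CharZero K] {α : K} (β : K) (hα : ∀ k : ℕ, α + 1 + k ≠ 0)
    (n : ℕ) (x : K) :
    2 * (n + α + β + 1) * (n + α + 1) * (2 * n + α + β) * normalizedJacobi α β (n + 1) x =
      (2 * n + α + β + 1) * ((2 * n + α + β + 2) * (2 * n + α + β) * x + (α ^ 2 - β ^ 2)) *
        normalizedJacobi α β n x -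
      2 * n * (n + β) * (2 * n + α + β + 2) * normalizedJacobi α β (n - 1) x := by
  have next := (hasSum_normalizedJacobi_sub_one α β (n + 1) x).mul_left
    (2 * (n + α + β + 1) * (n + α + 1) * (2 * n + α + β))
  have combination :=
    (((hasSum_normalizedJacobi_sub_one α β n x).mul_left
      ((2 * n + α + β + 1) * ((2 * n + α + β + 2) * (2 * n + α + β) + (α ^ 2 - β ^ 2)))).sub
    ((hasSum_normalizedJacobi α β n x).mul_left
      ((2 * n + α + β + 1) * ((2 * n + α + β + 2) * (2 * n + α + β)) * (1 - x)))).sub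
    ((hasSum_normalizedJacobi_sub_one α β (n - 1) x).mul_left
      (2 * n * (n + β) * (2 * n + α + β + 2)))
  have sums_agree := next.unique <| combination.congr_fun fun k => by
    -- The factor `n` makes the truncation of `n - 1` at `n = 0` harmless.
    have pred_cast : (n : K) * jacobiCoeff α β ((n - 1 : ℕ) : K) (k + 1) =
        n * jacobiCoeff α β (n - 1) (k + 1) := by
      rcases n with _ | n <;> simp
    have termwise := jacobiCoeff_recurrence β (n : K) (hα k)
    rw [Nat.cast_succ]
    linear_combination ((1 - x) / 2) ^ (k + 1) * (termwise +
      2 * (n + β) * (2 * n + α + β + 2) * pred_cast)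
  linear_combination sums_agree

end JacobiPolynomials

section JacobiCoefficients

lemma aCoef_zero_right (d : ℕ) : aCoef d 0 = aCoef0 d := by
  rw [aCoef, aCoef0]
  field_simp
  push_cast
  ring

lemma bCoef_zero_right {d : ℕ} (hd : 1 ≤ d) : bCoef d 0 = bCoef0 d := by
  have hd' : (d : ℝ) ≠ 0 := by positivity
  rw [bCoef, bCoef0]
  field_simp
  push_cast
  ring

lemma cCoef_zero_right (d : ℕ) : cCoef d 0 = 0 := by
  simp [cCoef]

lemma natCast_div_two_add_one_add_natCast_ne_zero (d k : ℕ) : (d : ℂ) / 2 + 1 + k ≠ 0 := by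
  simpa using Complex.ofReal_ne_zero.mpr (by positivity : (d : ℝ) / 2 + 1 + k ≠ 0)

lemma normalizedJacobi_half_zero_succ {d : ℕ} (hd : 1 ≤ d) (n : ℕ) (x : ℂ) :
    normalizedJacobi ((d : ℂ) / 2) 0 (n + 1) x =
      aCoef d n * x * normalizedJacobi ((d : ℂ) / 2) 0 n x +
        bCoef d n * normalizedJacobi ((d : ℂ) / 2) 0 n x -
        cCoef d n * normalizedJacobi ((d : ℂ) / 2) 0 (n - 1) x := by
  have leading_ne_zero : 2 * ((n : ℂ) + 1) + d ≠ 0 := by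
    exact_mod_cast (by lia : 2 * (n + 1) + d ≠ 0)
  have degree_ne_zero : 2 ^ 2 * (n : ℂ) + d ≠ 0 := by
    exact_mod_cast (by lia : 2 ^ 2 * n + d ≠ 0)
  have recurrence := normalizedJacobi_recurrence 0
    (natCast_div_two_add_one_add_natCast_ne_zero d) n x
  simp only [aCoef, bCoef, cCoef]
  push_cast
  field_simp
  linear_combination 64 * recurrence

end JacobiCoefficients

lemma hasSum_convolution {G R : Type*} [AddCommGroup G] [NormedRing R] [CompleteSpace R]
    {f g : G → R} (hf : Summable fun v => ‖f v‖) (hg : Summable fun v => ‖g v‖) :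
    HasSum (fun v => ∑' η, f (v - η) * g η) ((∑' v, f v) * ∑' v, g v) := by
  -- `(v, η) ↦ (v - η, η)`
  let shear : G × G ≃ G × G :=
    (Equiv.prodComm G G).trans <|
      (Equiv.prodShear (Equiv.refl G) Equiv.subRight).trans (Equiv.prodComm G G)
  have product : HasSum (fun p : G × G => f p.1 * g p.2) ((∑' v, f v) * ∑' v, g v) := by
    rw [tsum_mul_tsum_of_summable_norm hf hg]
    exact (summable_mul_of_summable_norm hf hg).hasSum
  have sheared := shear.hasSum_iff.mpr product
  exact sheared.prod_fiberwise fun v => (sheared.summable.prod_factor v).hasSum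

section Fourier

variable {d : ℕ}

/-- The character `v ↦ e^{i⟨θ, v⟩}` of the lattice `ℤ^d`. -/
def latticeChar (θ : Fin d → ℝ) (v : Fin d → ℤ) : ℂ :=
  Complex.exp (Complex.I * ((∑ i, θ i * (v i : ℝ) : ℝ) : ℂ))

lemma norm_latticeChar (θ : Fin d → ℝ) (v : Fin d → ℤ) : ‖latticeChar θ v‖ = 1 := by
  rw [latticeChar, Complex.norm_exp_I_mul_ofReal]

lemma latticeChar_zero_right (θ : Fin d → ℝ) : latticeChar θ 0 = 1 := by
  simp [latticeChar]

lemma latticeChar_add (θ : Fin d → ℝ) (v w : Fin d → ℤ) :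
    latticeChar θ (v + w) = latticeChar θ v * latticeChar θ w := by
  rw [latticeChar, latticeChar, latticeChar, ← Complex.exp_add, ← mul_add, ← Complex.ofReal_add,
    ← Finset.sum_add_distrib]
  simp only [Pi.add_apply, Int.cast_add, mul_add]

lemma summable_norm_mul_latticeChar {f : (Fin d → ℤ) → ℝ} (hf : Summable f) (θ : Fin d → ℝ) :
    Summable fun v => ‖(f v : ℂ) * latticeChar θ v‖ := by
  simpa only [norm_mul, norm_latticeChar, mul_one, Complex.norm_real] using hf.norm

lemma hasSum_ftOmega {f : (Fin d → ℤ) → ℝ} (hf : Summable f) (θ : Fin d → ℝ) :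
    HasSum (fun v => (f v : ℂ) * latticeChar θ v) (ftOmega f θ) :=
  (summable_norm_mul_latticeChar hf θ).of_norm.hasSum

lemma summable_latticeConv {f g : (Fin d → ℤ) → ℝ} (hf : Summable f) (hg : Summable g) :
    Summable (latticeConv f g) :=
  (hasSum_convolution hf.norm hg.norm).summable

lemma ftOmega_latticeConv {f g : (Fin d → ℤ) → ℝ} (hf : Summable f) (hg : Summable g)
    (θ : Fin d → ℝ) : ftOmega (latticeConv f g) θ = ftOmega f θ * ftOmega g θ := by
  have product := hasSum_convolution (summable_norm_mul_latticeChar hf θ)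
    (summable_norm_mul_latticeChar hg θ)
  refine (hasSum_ftOmega (summable_latticeConv hf hg) θ).unique (product.congr_fun fun v => ?_)
  rw [latticeConv, Complex.ofReal_tsum, ← tsum_mul_right]
  refine tsum_congr fun η => ?_
  rw [Complex.ofReal_mul, ← sub_add_cancel v η, latticeChar_add, add_sub_cancel_right]
  ring

/-- `x` is the Jacobi polynomial iteration with weights `ω` started at the origin. The first step
is included in `succ` as the case `n = 0`, where `cCoef d 0 = 0` and `n - 1` is irrelevant. -/
structure IsJacobiIteration (ω : (Fin d → ℤ) → ℝ) (x : ℕ → (Fin d → ℤ) → ℝ) : Prop where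
  zero : ∀ v, x 0 v = if v = 0 then 1 else 0
  succ : ∀ n v, x (n + 1) v =
    aCoef d n * latticeConv ω (x n) v + bCoef d n * x n v - cCoef d n * x (n - 1) v

variable {ω : (Fin d → ℤ) → ℝ} {x : ℕ → (Fin d → ℤ) → ℝ}

lemma isJacobiIteration_of_first_step (hd : 1 ≤ d) (hx0 : ∀ v, x 0 v = if v = 0 then 1 else 0)
    (hx1 : ∀ v, x 1 v = aCoef0 d * latticeConv ω (x 0) v + bCoef0 d * x 0 v)
    (hrec : ∀ n, 1 ≤ n → ∀ v, x (n + 1) v =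
      aCoef d n * latticeConv ω (x n) v + bCoef d n * x n v - cCoef d n * x (n - 1) v) :
    IsJacobiIteration ω x where
  zero := hx0
  succ n v := by
    rcases n.eq_zero_or_pos with rfl | hn
    · rw [hx1, aCoef_zero_right, bCoef_zero_right hd, cCoef_zero_right, zero_mul, sub_zero]
    · exact hrec n hn v

lemma IsJacobiIteration.summable (hx : IsJacobiIteration ω x) (hω : Summable ω) (n : ℕ) :
    Summable (x n) := by
  induction n using Nat.strong_induction_on with
  | _ n ih =>
    rcases n with _ | n
    · rw [funext hx.zero]
      exact (hasSum_ite_eq 0 1).summable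
    · rw [funext (hx.succ n)]
      exact (((summable_latticeConv hω (ih n (by lia))).mul_left _).add
        ((ih n (by lia)).mul_left _)).sub ((ih (n - 1) (by lia)).mul_left _)

lemma IsJacobiIteration.ftOmega_succ (hx : IsJacobiIteration ω x) (hω : Summable ω) (n : ℕ)
    (θ : Fin d → ℝ) :
    ftOmega (x (n + 1)) θ =
      aCoef d n * (ftOmega ω θ * ftOmega (x n) θ) + bCoef d n * ftOmega (x n) θ -
        cCoef d n * ftOmega (x (n - 1)) θ := by
  have summable_x := hx.summable hω
  rw [← ftOmega_latticeConv hω (summable_x n)]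
  have combination :=
    (((hasSum_ftOmega (summable_latticeConv hω (summable_x n)) θ).mul_left (aCoef d n : ℂ)).add
      ((hasSum_ftOmega (summable_x n) θ).mul_left (bCoef d n : ℂ))).sub
      ((hasSum_ftOmega (summable_x (n - 1)) θ).mul_left (cCoef d n : ℂ))
  refine (hasSum_ftOmega (summable_x (n + 1)) θ).unique (combination.congr_fun fun v => ?_)
  rw [hx.succ]
  push_cast
  ring

theorem IsJacobiIteration.ftOmega_eq_normalizedJacobi (hx : IsJacobiIteration ω x) (hd : 1 ≤ d)
    (hω : Summable ω) (n : ℕ) (θ : Fin d → ℝ) :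
    ftOmega (x n) θ = normalizedJacobi ((d : ℂ) / 2) 0 n (ftOmega ω θ) := by
  induction n using Nat.strong_induction_on with
  | _ n ih =>
    rcases n with _ | n
    · rw [normalizedJacobi_zero]
      refine (hasSum_ftOmega (hx.summable hω 0) θ).unique ?_
      convert hasSum_ite_eq (0 : Fin d → ℤ) (1 : ℂ) using 2 with v
      rw [hx.zero]
      split_ifs with hv
      · simp [hv, latticeChar_zero_right]
      · simp
    · rw [hx.ftOmega_succ hω, ih n (by lia), ih (n - 1) (by lia),
        normalizedJacobi_half_zero_succ hd, mul_assoc]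

end Fourier

section MehlerHeine

lemma ascPochhammer_eval_ne_zero {R : Type*} [Ring R] [IsDomain R] {b : R}
    (hb : ∀ k : ℕ, b ≠ -k) (k : ℕ) : (ascPochhammer R k).eval b ≠ 0 := by
  rw [Ne, ascPochhammer_eval_eq_zero_iff]
  rintro ⟨j, -, hj⟩
  exact hb j (by rw [hj, neg_neg])

lemma tendsto_ascPochhammer_eval_div_pow {K : Type*} [Field K] [TopologicalSpace K]
    [IsTopologicalRing K] {ι : Type*} {l : Filter ι} {s r : ι → K} {σ : K}
    (hs : Tendsto (fun i => s i / r i) l (𝓝 σ)) (hr : Tendsto (fun i => (r i)⁻¹) l (𝓝 0)) (k : ℕ) :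
    Tendsto (fun i => (ascPochhammer K k).eval (s i) / r i ^ k) l (𝓝 (σ ^ k)) := by
  induction k with
  | zero => simpa using tendsto_const_nhds
  | succ k ih =>
    have last_factor := hs.add (hr.const_mul (k : K))
    rw [mul_zero, add_zero] at last_factor
    rw [pow_succ]
    refine (ih.mul last_factor).congr fun i => ?_
    rw [ascPochhammer_succ_eval, pow_succ, mul_div_mul_comm, add_div, div_eq_mul_inv (k : K)]

variable {𝕜 : Type*} [RCLike 𝕜]

lemma norm_ascPochhammer_eval_neg_natCast_le (n k : ℕ) :
    ‖(ascPochhammer 𝕜 k).eval (-(n : 𝕜))‖ ≤ (n : ℝ) ^ k := by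
  rw [ascPochhammer_eval_neg_eq_descPochhammer, descPochhammer_eval_eq_descFactorial, norm_mul,
    norm_pow, norm_neg, norm_one, one_pow, one_mul, RCLike.norm_natCast]
  exact_mod_cast Nat.descFactorial_le_pow n k

lemma exists_norm_natCast_add_le_mul {b : 𝕜} (hb : ∀ k : ℕ, b ≠ -k) (c : 𝕜) :
    ∃ C : ℝ, 0 ≤ C ∧ ∀ n : ℕ, 1 ≤ n → ∀ k : ℕ, ‖(n : 𝕜) + c + k‖ ≤ C * n * ‖b + k‖ := by
  have ratio_tendsto := (tendsto_add_mul_div_add_mul_atTop_nhds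
    ((‖c‖ + 1 : ℝ) : 𝕜) b 1 one_ne_zero).norm
  obtain ⟨C, hC⟩ := ratio_tendsto.bddAbove_range
  refine ⟨C, (norm_nonneg _).trans (hC ⟨0, rfl⟩), fun n hn k => ?_⟩
  have ratio_le : ‖c‖ + 1 + k ≤ C * ‖b + k‖ := by
    have norm_numerator : ‖((‖c‖ + 1 : ℝ) : 𝕜) + k‖ = ‖c‖ + 1 + k := by
      rw [← RCLike.ofReal_natCast, ← RCLike.ofReal_add, RCLike.norm_of_nonneg (by positivity)]
    have denominator_pos : 0 < ‖b + k‖ :=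
      norm_pos_iff.mpr (mt add_eq_zero_iff_eq_neg.mp (hb k))
    rw [← norm_numerator, ← div_le_iff₀ denominator_pos, ← norm_div]
    simpa only [one_mul] using hC ⟨k, rfl⟩
  have one_le : (1 : ℝ) ≤ n := by exact_mod_cast hn
  calc ‖(n : 𝕜) + c + k‖ ≤ n + ‖c‖ + k := by
        simpa using norm_add₃_le (a := (n : 𝕜)) (b := c) (c := (k : 𝕜))
    _ ≤ n * (‖c‖ + 1 + k) := by nlinarith [norm_nonneg c, Nat.cast_nonneg (α := ℝ) k]
    _ ≤ n * (C * ‖b + k‖) := by gcongr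
    _ = C * n * ‖b + k‖ := by ring

lemma exists_norm_ascPochhammer_eval_le {b : 𝕜} (hb : ∀ k : ℕ, b ≠ -k) (c : 𝕜) :
    ∃ C : ℝ, 0 ≤ C ∧ ∀ n : ℕ, 1 ≤ n → ∀ k : ℕ, ‖(ascPochhammer 𝕜 k).eval (n + c)‖ ≤
      (C * n) ^ k * ‖(ascPochhammer 𝕜 k).eval b‖ := by
  obtain ⟨C, C_nonneg, factor_le⟩ := exists_norm_natCast_add_le_mul hb c
  refine ⟨C, C_nonneg, fun n hn k => ?_⟩
  induction k with
  | zero => simp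
  | succ k ih =>
    rw [ascPochhammer_succ_eval, ascPochhammer_succ_eval, norm_mul, norm_mul, pow_succ,
      mul_mul_mul_comm]
    exact mul_le_mul ih (factor_le n hn k) (norm_nonneg _) (by positivity)

lemma exists_norm_ordinaryHypergeometricCoefficient_le {b : 𝕜} (hb : ∀ k : ℕ, b ≠ -k) (c : 𝕜) :
    ∃ C : ℝ, 0 ≤ C ∧ ∀ n : ℕ, 1 ≤ n → ∀ k : ℕ,
      ‖ordinaryHypergeometricCoefficient (-(n : 𝕜)) (n + c) b k‖ ≤
        (C * (n : ℝ) ^ 2) ^ k / k.factorial := by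
  obtain ⟨C, C_nonneg, pochhammer_le⟩ := exists_norm_ascPochhammer_eval_le hb c
  refine ⟨C, C_nonneg, fun n hn k => ?_⟩
  have denominator_pos := norm_pos_iff.mpr (ascPochhammer_eval_ne_zero hb k)
  rw [ordinaryHypergeometricCoefficient, norm_mul, norm_mul, norm_mul, norm_inv, norm_inv,
    RCLike.norm_natCast]
  calc _ ≤ (k.factorial : ℝ)⁻¹ * (n : ℝ) ^ k *
        ((C * n) ^ k * ‖(ascPochhammer 𝕜 k).eval b‖) * ‖(ascPochhammer 𝕜 k).eval b‖⁻¹ := by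
        gcongr
        exacts [norm_ascPochhammer_eval_neg_natCast_le n k, pochhammer_le n hn k]
    _ = (C * (n : ℝ) ^ 2) ^ k / k.factorial := by
        field_simp
        ring

variable {ι : Type*} {l : Filter ι}

lemma tendsto_ordinaryHypergeometricCoefficient_mul_pow {N : ι → ℕ} (hN : Tendsto N l atTop)
    {z : ι → 𝕜} {w : 𝕜} (hz : Tendsto (fun i => (N i : 𝕜) ^ 2 * z i) l (𝓝 w)) (b c : 𝕜) (k : ℕ) :
    Tendsto (fun i => ordinaryHypergeometricCoefficient (-(N i : 𝕜)) (N i + c) b k * z i ^ k) l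
      (𝓝 (((k.factorial : 𝕜) * (ascPochhammer 𝕜 k).eval b)⁻¹ * (-w) ^ k)) := by
  have N_ne_zero : ∀ᶠ i in l, (N i : 𝕜) ≠ 0 :=
    (hN.eventually_ne_atTop 0).mono fun i hi => Nat.cast_ne_zero.mpr hi
  have inv_N : Tendsto (fun i => (N i : 𝕜)⁻¹) l (𝓝 0) := tendsto_inv_atTop_nhds_zero_nat.comp hN
  have first_ratio : Tendsto (fun i => -(N i : 𝕜) / N i) l (𝓝 (-1)) :=
    tendsto_const_nhds.congr' <| N_ne_zero.mono fun i hi => by field_simp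
  have second_ratio : Tendsto (fun i => ((N i : 𝕜) + c) / N i) l (𝓝 1) := by
    have := (inv_N.const_mul c).const_add 1
    rw [mul_zero, add_zero] at this
    exact this.congr' <| N_ne_zero.mono fun i hi => by field_simp
  have rescaled := (((tendsto_ascPochhammer_eval_div_pow first_ratio inv_N k).mul
    (tendsto_ascPochhammer_eval_div_pow second_ratio inv_N k)).mul (hz.pow k)).const_mul
      ((k.factorial : 𝕜) * (ascPochhammer 𝕜 k).eval b)⁻¹
  rw [one_pow, mul_one, ← mul_pow, neg_one_mul] at rescaled
  refine rescaled.congr' (N_ne_zero.mono fun i hi => ?_)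
  simp only [ordinaryHypergeometricCoefficient]
  field_simp
  ring

lemma regularizedHGFun_zero_singleton (b w : ℂ) :
    Complex.regularizedHGFun 0 {b} w =
      ∑' k : ℕ, ((k.factorial : ℂ) * Complex.Gamma (b + k))⁻¹ * w ^ k := by
  rw [Complex.regularizedHGFun, Complex.regularizedHGFunSeries]
  refine (FormalMultilinearSeries.ofScalars_sum_eq _ w).trans (tsum_congr fun k => ?_)
  simp [Complex.regularizedHGFunCoeff]

theorem tendsto_ordinaryHypergeometric_neg_natCast {b : ℂ} (hb : ∀ k : ℕ, b ≠ -k) (c : ℂ)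
    {N : ι → ℕ} (hN : Tendsto N l atTop) {z : ι → ℂ} {w : ℂ}
    (hz : Tendsto (fun i => (N i : ℂ) ^ 2 * z i) l (𝓝 w)) :
    Tendsto (fun i => ₂F₁ (-(N i : ℂ)) (N i + c) b (z i)) l
      (𝓝 (Complex.Gamma b * Complex.regularizedHGFun 0 {b} (-w))) := by
  obtain ⟨C, C_nonneg, coefficient_le⟩ := exists_norm_ordinaryHypergeometricCoefficient_le hb c
  have Gamma_shift (k : ℕ) :
      Complex.Gamma b * ((k.factorial : ℂ) * Complex.Gamma (b + k))⁻¹ =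
        ((k.factorial : ℂ) * (ascPochhammer ℂ k).eval b)⁻¹ := by
    have := Complex.Gamma_ne_zero hb
    rw [← Complex.Gamma_add_nat_div_Gamma_eq b hb]
    field_simp
  simp only [regularizedHGFun_zero_singleton, ← tsum_mul_left, ← mul_assoc, Gamma_shift]
  simp only [ordinaryHypergeometric_eq_tsum, smul_eq_mul]
  refine tendsto_tsum_of_dominated_convergence (Real.summable_pow_div_factorial (C * (‖w‖ + 1)))
    (tendsto_ordinaryHypergeometricCoefficient_mul_pow hN hz b c) ?_
  filter_upwards [hz.norm.eventually_le_const (lt_add_one ‖w‖), hN.eventually_ge_atTop 1]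
    with i z_le one_le k
  rw [norm_mul, norm_pow, Complex.norm_natCast] at z_le
  rw [norm_mul, norm_pow]
  calc _ ≤ (C * (N i : ℝ) ^ 2) ^ k / k.factorial * ‖z i‖ ^ k := by
        gcongr
        exact coefficient_le _ one_le k
    _ = (C * ((N i : ℝ) ^ 2 * ‖z i‖)) ^ k / k.factorial := by ring
    _ ≤ (C * (‖w‖ + 1)) ^ k / k.factorial := by gcongr

theorem tendsto_normalizedJacobi {α : ℂ} (hα : ∀ k : ℕ, α + 1 + k ≠ 0) (β : ℂ) {N : ι → ℕ}
    (hN : Tendsto N l atTop) {x : ι → ℂ} {w : ℂ}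
    (hx : Tendsto (fun i => (N i : ℂ) ^ 2 * ((1 - x i) / 2)) l (𝓝 w)) :
    Tendsto (fun i => normalizedJacobi α β (N i) (x i)) l
      (𝓝 (Complex.Gamma (α + 1) * Complex.regularizedHGFun 0 {α + 1} (-w))) := by
  simpa only [normalizedJacobi, add_assoc] using tendsto_ordinaryHypergeometric_neg_natCast
    (fun k => mt eq_neg_iff_add_eq_zero.mp (hα k)) (α + (β + 1)) hN hx

end MehlerHeine

section Bessel

theorem ofReal_besselJ (ν : ℝ) {z : ℝ} (hz : 0 < z) :
    (besselJ ν z : ℂ) =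
      ((z / 2) ^ ν : ℝ) * Complex.regularizedHGFun 0 {(ν : ℂ) + 1} (-((z / 2) ^ 2 : ℝ)) := by
  rw [besselJ, regularizedHGFun_zero_singleton, ← tsum_mul_left, Complex.ofReal_tsum]
  refine tsum_congr fun k => ?_
  have power : (z / 2) ^ (2 * (k : ℝ) + ν) = (z / 2) ^ ν * ((z / 2) ^ 2) ^ k := by
    rw [add_comm, Real.rpow_add (by positivity), ← pow_mul, ← Real.rpow_natCast]
    push_cast
    rfl
  have Gamma_cast : (Real.Gamma (k + ν + 1) : ℂ) = Complex.Gamma (ν + 1 + k) := by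
    rw [← Complex.Gamma_ofReal]
    push_cast
    ring_nf
  rw [power, Complex.ofReal_mul, Complex.ofReal_div, Complex.ofReal_mul, Gamma_cast,
    neg_pow (_ : ℂ)]
  push_cast
  ring

lemma Gamma_mul_regularizedHGFun_eq_besselJ (a : ℝ) {t q : ℝ} (ht : 0 < t) (hq : 0 < q) :
    Complex.Gamma (a + 1) * Complex.regularizedHGFun 0 {(a : ℂ) + 1} (-(t ^ 2 * (q / 4)) : ℝ) =
      ((2 ^ a * Real.Gamma (a + 1) * q ^ (-a / 2) * t ^ (-a) * besselJ a (t * √q) : ℝ) : ℂ) := by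
  have argument : (t * √q / 2) ^ 2 = t ^ 2 * (q / 4) := by
    rw [div_pow, mul_pow, Real.sq_sqrt hq.le]; ring
  have prefactor : 2 ^ a * q ^ (-a / 2) * t ^ (-a) * (t * √q / 2) ^ a = 1 := by
    rw [Real.div_rpow (by positivity) zero_le_two, Real.mul_rpow ht.le (Real.sqrt_nonneg q),
      Real.sqrt_eq_rpow, ← Real.rpow_mul hq.le, neg_div, Real.rpow_neg hq.le, Real.rpow_neg ht.le,
      one_div_mul_eq_div]
    field_simp
  rw [Complex.ofReal_mul, ofReal_besselJ a (by positivity), argument, ← mul_assoc,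
    ← Complex.ofReal_mul]
  rw [show 2 ^ a * Real.Gamma (a + 1) * q ^ (-a / 2) * t ^ (-a) * (t * √q / 2) ^ a =
    Real.Gamma (a + 1) by linear_combination Real.Gamma (a + 1) * prefactor]
  rw [← Complex.Gamma_ofReal]
  push_cast
  rfl

end Bessel

section SecondMoment

lemma norm_exp_I_mul_sub_one_sub_le (y : ℝ) :
    ‖Complex.exp (Complex.I * y) - 1 - Complex.I * y‖ ≤ 2 * y ^ 2 := by
  have norm_I_mul : ‖Complex.I * (y : ℂ)‖ = |y| := by simp
  rcases le_or_gt |y| 1 with hy | hy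
  · calc ‖Complex.exp (Complex.I * y) - 1 - Complex.I * y‖
        ≤ ‖Complex.I * (y : ℂ)‖ ^ 2 := Complex.norm_exp_sub_one_sub_id_le (norm_I_mul.trans_le hy)
      _ ≤ 2 * y ^ 2 := by rw [norm_I_mul, sq_abs]; linarith [sq_nonneg y]
  · calc ‖Complex.exp (Complex.I * y) - 1 - Complex.I * y‖
        ≤ |y| + |y| := norm_sub_le_of_le Real.norm_exp_I_mul_ofReal_sub_one_le norm_I_mul.le
      _ ≤ 2 * y ^ 2 := by rw [← sq_abs]; nlinarith

lemma tendsto_exp_I_mul_sub_one_sub_div_sq (s : ℝ) :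
    Tendsto (fun ε : ℝ => (Complex.exp (Complex.I * (ε * s : ℝ)) - 1 - Complex.I * (ε * s : ℝ)) /
      (ε : ℂ) ^ 2) (𝓝[≠] 0) (𝓝 (-((s : ℂ) ^ 2 / 2))) := by
  have argument_tendsto : Tendsto (fun ε : ℝ => Complex.I * (ε * s : ℝ)) (𝓝[≠] 0) (𝓝 0) := by
    refine Tendsto.mono_left (Continuous.tendsto' (by fun_prop) _ _ (by simp)) nhdsWithin_le_nhds
  have remainder_littleO :=
    (Complex.exp_sub_sum_range_succ_isLittleO_pow 2).comp_tendsto argument_tendsto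
  have square_bigO : (fun ε : ℝ => (Complex.I * ((ε * s : ℝ) : ℂ)) ^ 2) =O[𝓝[≠] 0]
      fun ε : ℝ => (ε : ℂ) ^ 2 :=
    (Asymptotics.isBigO_const_mul_self ((Complex.I * s) ^ 2) _ _).congr_left fun ε => by
      push_cast; ring
  have quotient_tendsto := (remainder_littleO.trans_isBigO square_bigO).tendsto_div_nhds_zero
  refine ((quotient_tendsto.add_const (-((s : ℂ) ^ 2 / 2))).congr' ?_).trans_eq (by rw [zero_add])
  filter_upwards [self_mem_nhdsWithin] with ε (hε : ε ≠ 0)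
  have hε' : (ε : ℂ) ≠ 0 := Complex.ofReal_ne_zero.mpr hε
  simp only [Function.comp_apply, Finset.sum_range_succ, Finset.sum_range_zero, Nat.factorial]
  push_cast
  field_simp
  linear_combination -(ε : ℂ) ^ 2 * s ^ 2 * Complex.I_sq

theorem tendsto_sub_tsum_mul_exp_div_sq {V : Type*} {w s : V → ℝ} {m σ : ℝ} (mass : HasSum w m)
    (mean_zero : HasSum (fun v => w v * s v) 0) (moment : HasSum (fun v => w v * s v ^ 2) σ) :
    Tendsto (fun ε : ℝ => ((m : ℂ) - ∑' v, (w v : ℂ) * Complex.exp (Complex.I * (ε * s v : ℝ))) /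
      (ε : ℂ) ^ 2) (𝓝[≠] 0) (𝓝 (σ / 2)) := by
  -- As `w` has mean zero, each exponential may be replaced by its second-order Taylor remainder.
  let remainder (ε : ℝ) (v : V) : ℂ :=
    Complex.exp (Complex.I * (ε * s v : ℝ)) - 1 - Complex.I * (ε * s v : ℝ)
  have limit : Tendsto (fun ε : ℝ => ∑' v, -(w v : ℂ) * (remainder ε v / (ε : ℂ) ^ 2)) (𝓝[≠] 0)
      (𝓝 (∑' v, -(w v : ℂ) * -((s v : ℂ) ^ 2 / 2))) := by
    refine tendsto_tsum_of_dominated_convergence (moment.summable.abs.mul_left 2)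
      (fun v => (tendsto_exp_I_mul_sub_one_sub_div_sq (s v)).const_mul _) ?_
    filter_upwards [self_mem_nhdsWithin] with ε (hε : ε ≠ 0) v
    rw [norm_mul, norm_neg, Complex.norm_real, Real.norm_eq_abs, norm_div, norm_pow,
      Complex.norm_real, Real.norm_eq_abs, sq_abs, abs_mul, abs_sq, mul_left_comm]
    gcongr
    rw [div_le_iff₀ (by positivity), mul_assoc, ← mul_pow, mul_comm (s v)]
    exact norm_exp_I_mul_sub_one_sub_le (ε * s v)
  have sum_moment : ∑' v, -(w v : ℂ) * -((s v : ℂ) ^ 2 / 2) = (σ : ℂ) / 2 := by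
    rw [← (Complex.hasSum_ofReal.mpr moment).tsum_eq, ← tsum_div_const]
    exact tsum_congr fun v => by push_cast; ring
  rw [sum_moment] at limit
  refine limit.congr fun ε => ?_
  have exp_summable : Summable fun v => (w v : ℂ) * Complex.exp (Complex.I * (ε * s v : ℝ)) := by
    refine .of_norm (mass.summable.norm.congr fun v => ?_)
    rw [norm_mul, Complex.norm_real, Complex.norm_exp_I_mul_ofReal, mul_one]
  have combination := ((Complex.hasSum_ofReal.mpr mass).sub exp_summable.hasSum).add
    ((Complex.hasSum_ofReal.mpr mean_zero).mul_left (Complex.I * ε)) |>.div_const ((ε : ℂ) ^ 2)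
  rw [Complex.ofReal_zero, mul_zero, add_zero] at combination
  refine (combination.congr_fun fun v => ?_).tsum_eq
  simp only [remainder]
  push_cast
  ring

lemma tendsto_floor_div_nhdsGT_zero {t : ℝ} (ht : 0 < t) :
    Tendsto (fun ε : ℝ => ⌊t / ε⌋₊) (𝓝[>] 0) atTop := by
  simpa only [Function.comp_def, div_eq_mul_inv] using
    tendsto_nat_floor_atTop.comp (tendsto_inv_nhdsGT_zero.const_mul_atTop ht)

lemma tendsto_floor_div_mul {t : ℝ} (ht : 0 ≤ t) :
    Tendsto (fun ε : ℝ => (⌊t / ε⌋₊ : ℝ) * ε) (𝓝[>] 0) (𝓝 t) := by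
  simpa only [Function.comp_def, ← div_eq_mul_inv, div_inv_eq_mul] using
    (tendsto_nat_floor_mul_div_atTop ht).comp tendsto_inv_nhdsGT_zero

variable {d : ℕ}

lemma hasSum_mul_dotProduct_sq {ω : (Fin d → ℤ) → ℝ}
    (hmom : ∀ i j, Summable fun v => ω v * (v i : ℝ) * (v j : ℝ)) (ξ : Fin d → ℝ) :
    HasSum (fun v => ω v * (∑ i, ξ i * (v i : ℝ)) ^ 2) (ξ ⬝ᵥ (covQ d ω *ᵥ ξ)) := by
  have entrywise : HasSum (fun v : Fin d → ℤ => ∑ i, ∑ j, ξ i * (ω v * (v i : ℝ) * (v j : ℝ) * ξ j))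
      (∑ i, ∑ j, ξ i * (covQ d ω i j * ξ j)) :=
    hasSum_sum fun i _ => hasSum_sum fun j _ => ((hmom i j).hasSum.mul_right _).mul_left _
  simp only [dotProduct, mulVec, Finset.mul_sum]
  refine entrywise.congr_fun fun v => ?_
  rw [sq, Finset.sum_mul_sum, Finset.mul_sum]
  refine Finset.sum_congr rfl fun i _ => ?_
  rw [Finset.mul_sum]
  exact Finset.sum_congr rfl fun j _ => by ring

lemma latticeChar_smul (ε : ℝ) (ξ : Fin d → ℝ) (v : Fin d → ℤ) :
    latticeChar (ε • ξ) v = Complex.exp (Complex.I * ((ε * ∑ i, ξ i * (v i : ℝ) : ℝ) : ℂ)) := by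
  simp only [latticeChar, Pi.smul_apply, smul_eq_mul, Finset.mul_sum, mul_assoc]

lemma ftOmega_smul (f : (Fin d → ℤ) → ℝ) (ε : ℝ) (ξ : Fin d → ℝ) :
    ftOmega f (ε • ξ) =
      ∑' v, (f v : ℂ) * Complex.exp (Complex.I * ((ε * ∑ i, ξ i * (v i : ℝ) : ℝ) : ℂ)) :=
  tsum_congr fun v => by rw [← latticeChar_smul, latticeChar]

lemma hasSum_mul_dotProduct_zero {ω : (Fin d → ℤ) → ℝ}
    (hmean : ∀ i, HasSum (fun v => ω v * (v i : ℝ)) 0) (ξ : Fin d → ℝ) :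
    HasSum (fun v => ω v * ∑ i, ξ i * (v i : ℝ)) 0 := by
  have coordinatewise := hasSum_sum fun i (_ : i ∈ Finset.univ) => (hmean i).mul_left (ξ i)
  simp only [mul_zero, Finset.sum_const_zero] at coordinatewise
  refine coordinatewise.congr_fun fun v => ?_
  rw [Finset.mul_sum]
  exact Finset.sum_congr rfl fun i _ => by ring

theorem tendsto_one_sub_ftOmega_smul_div_sq {ω : (Fin d → ℤ) → ℝ} (hmass : HasSum ω 1)
    (hmean : ∀ i, HasSum (fun v => ω v * (v i : ℝ)) 0)
    (hmom : ∀ i j, Summable fun v => ω v * (v i : ℝ) * (v j : ℝ)) (ξ : Fin d → ℝ) :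
    Tendsto (fun ε : ℝ => (1 - ftOmega ω (ε • ξ)) / (ε : ℂ) ^ 2) (𝓝[≠] 0)
      (𝓝 (((ξ ⬝ᵥ (covQ d ω *ᵥ ξ) : ℝ) : ℂ) / 2)) := by
  simpa only [ftOmega_smul, Complex.ofReal_one] using tendsto_sub_tsum_mul_exp_div_sq hmass
    (hasSum_mul_dotProduct_zero hmean ξ) (hasSum_mul_dotProduct_sq hmom ξ)

lemma tendsto_floor_sq_mul_one_sub_ftOmega {ω : (Fin d → ℤ) → ℝ} (hmass : HasSum ω 1)
    (hmean : ∀ i, HasSum (fun v => ω v * (v i : ℝ)) 0)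
    (hmom : ∀ i j, Summable fun v => ω v * (v i : ℝ) * (v j : ℝ)) (ξ : Fin d → ℝ)
    {t : ℝ} (ht : 0 ≤ t) :
    Tendsto (fun ε : ℝ => (⌊t / ε⌋₊ : ℂ) ^ 2 * ((1 - ftOmega ω (ε • ξ)) / 2)) (𝓝[>] 0)
      (𝓝 ((t ^ 2 * (ξ ⬝ᵥ (covQ d ω *ᵥ ξ) / 4) : ℝ) : ℂ)) := by
  have steps := ((Complex.continuous_ofReal.tendsto t).comp (tendsto_floor_div_mul ht)).pow 2
  have symbol := ((tendsto_one_sub_ftOmega_smul_div_sq hmass hmean hmom ξ).mono_left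
    (nhdsGT_le_nhdsNE 0)).div_const 2
  convert (steps.mul symbol).congr' ?_ using 2
  · push_cast; ring
  filter_upwards [self_mem_nhdsWithin] with ε (hε : 0 < ε)
  have hε' : (ε : ℂ) ≠ 0 := Complex.ofReal_ne_zero.mpr hε.ne'
  simp only [Function.comp_apply]
  push_cast
  field_simp

end SecondMoment

lemma hasSum_zero_of_odd {ι E : Type*} [InvolutiveNeg ι] [AddCommGroup E] [IsAddTorsionFree E]
    [TopologicalSpace E] [IsTopologicalAddGroup E] [T2Space E] {f : ι → E} (hf : Summable f)
    (hodd : f.Odd) : HasSum f 0 := by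
  have reflected := (Equiv.neg ι).hasSum_iff.mpr hf.hasSum
  have sum_eq_neg : ∑' i, f i = -∑' i, f i :=
    reflected.unique (hf.hasSum.neg.congr_fun hodd)
  exact self_eq_neg.mp sum_eq_neg ▸ hf.hasSum

theorem jacobi_iteration_fourier_pointwise_general {d : ℕ} {ω : (Fin d → ℤ) → ℝ}
    (hmass : HasSum ω 1) (hmean : ∀ i, HasSum (fun v => ω v * (v i : ℝ)) 0)
    (hmom : ∀ i j, Summable fun v => ω v * (v i : ℝ) * (v j : ℝ))
    {x : ℕ → (Fin d → ℤ) → ℝ} (hx : IsJacobiIteration ω x) {t : ℝ} (ht : 0 < t)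
    {ξ : Fin d → ℝ} (hξ : 0 < ξ ⬝ᵥ (covQ d ω *ᵥ ξ)) :
    Tendsto (fun ε : ℝ => ∑' v : Fin d → ℤ,
        (x ⌊t / ε⌋₊ v : ℂ) *
          Complex.exp (Complex.I * ((ε * ∑ i, ξ i * (v i : ℝ) : ℝ) : ℂ)))
      (𝓝[>] 0)
      (𝓝 (Complex.ofReal ((2 : ℝ) ^ ((d : ℝ) / 2) * Real.Gamma ((d : ℝ) / 2 + 1) *
            (ξ ⬝ᵥ (covQ d ω *ᵥ ξ)) ^ (-(d : ℝ) / 4) * t ^ (-(d : ℝ) / 2) *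
            besselJ ((d : ℝ) / 2) (t * Real.sqrt (ξ ⬝ᵥ (covQ d ω *ᵥ ξ)))))) := by
  have hd : 1 ≤ d := Nat.one_le_iff_ne_zero.mpr fun hd => by subst hd; simp at hξ
  have mehler_heine := tendsto_normalizedJacobi (natCast_div_two_add_one_add_natCast_ne_zero d) 0
    (tendsto_floor_div_nhdsGT_zero ht)
    (tendsto_floor_sq_mul_one_sub_ftOmega hmass hmean hmom ξ ht.le)
  have bessel := Gamma_mul_regularizedHGFun_eq_besselJ ((d : ℝ) / 2) ht hξ
  rw [show -((d : ℝ) / 2) / 2 = -(d : ℝ) / 4 by ring, ← neg_div] at bessel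
  rw [← bessel]
  simpa only [← ftOmega_smul, hx.ftOmega_eq_normalizedJacobi hd hmass.summable, Complex.ofReal_div,
    Complex.ofReal_natCast, Complex.ofReal_ofNat, Complex.ofReal_neg] using mehler_heine

/-- Pointwise convergence of the discrete Fourier transforms of the Jacobi polynomial
iteration to the Fourier transform of the fundamental solution of the EPD equation. -/
theorem jacobi_iteration_fourier_pointwise
    (d : ℕ) (hd : 1 ≤ d) (ω : (Fin d → ℤ) → ℝ)
    (hfin : (Function.support ω).Finite) (hnn : ∀ v, 0 ≤ ω v)
    (hmass : ∑' v : Fin d → ℤ, ω v = 1) (hsymm : ∀ v, ω (-v) = ω v)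
    (hQ : (covQ d ω).PosDef)
    (haper : ∀ ξ : Fin d → ℝ, (∀ i, ξ i ∈ Set.Icc (-π) π) → ξ ≠ 0 →
      ‖ftOmega ω ξ‖ < 1)
    (x : ℕ → (Fin d → ℤ) → ℝ)
    (hx0 : ∀ v, x 0 v = if v = 0 then 1 else 0)
    (hx1 : ∀ v, x 1 v = aCoef0 d * latticeConv ω (x 0) v + bCoef0 d * x 0 v)
    (hrec : ∀ n, 1 ≤ n → ∀ v,
      x (n + 1) v = aCoef d n * latticeConv ω (x n) v + bCoef d n * x n v - cCoef d n * x (n - 1) v)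
    (t : ℝ) (ht : 0 < t) (ξ : Fin d → ℝ) (hξ : ξ ≠ 0) :
    Tendsto (fun ε : ℝ => ∑' v : Fin d → ℤ,
        (x ⌊t / ε⌋₊ v : ℂ) *
          Complex.exp (Complex.I * ((ε * ∑ i, ξ i * (v i : ℝ) : ℝ) : ℂ)))
      (𝓝[>] 0)
      (𝓝 (Complex.ofReal ((2 : ℝ) ^ ((d : ℝ) / 2) * Real.Gamma ((d : ℝ) / 2 + 1) *
            (ξ ⬝ᵥ (covQ d ω *ᵥ ξ)) ^ (-(d : ℝ) / 4) * t ^ (-(d : ℝ) / 2) *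
            besselJ ((d : ℝ) / 2) (t * Real.sqrt (ξ ⬝ᵥ (covQ d ω *ᵥ ξ)))))) := by
  have hω : ω.HasFiniteSupport := hfin
  exact jacobi_iteration_fourier_pointwise_general
    (hmass ▸ (summable_of_hasFiniteSupport hω).hasSum)
    (fun i => hasSum_zero_of_odd (summable_of_hasFiniteSupport (hω.mul_left _)) fun v => by
      simp [hsymm])
    (fun i j => summable_of_hasFiniteSupport ((hω.mul_left _).mul_left _))
    (isJacobiIteration_of_first_step hd hx0 hx1 hrec) ht
    (by simpa using hQ.dotProduct_mulVec_pos hξ)
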